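/- For each n ∈ ℕ there is a unique q_n ∈ (0,1) such that Σ_{k ∈ ℕ^r} a_r(k)·q_n^{a_r(k)}/(1 − q_n^{a_r(k)}) = n, and q_n equivalently maximizes q ↦ q^n · ∏_{k ∈ ℕ^r} (1 − q^{a_r(k)}) over q ∈ (0,1). -/

import Mathlib

open Finset

/-- `h_r(y) = ∏_{1 ≤ ℓ ≤ j ≤ r} (y_ℓ + ⋯ + y_j)`. -/
noncomputable def hpoly (r : ℕ) (y : Fin r → ℝ) : ℝ :=
  ∏ p ∈ Finset.univ.filter (fun p : Fin r × Fin r => p.1 ≤ p.2),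
    ∑ i ∈ Finset.Icc p.1 p.2, y i

/-- `c_r = r!(r-1)!⋯1!`. -/
def crconst (r : ℕ) : ℕ := ∏ i ∈ Finset.range r, Nat.factorial (i + 1)

/-- The Weyl dimension polynomial `a_r(k) = h_r(k)/c_r`. -/
noncomputable def apoly (r : ℕ) (y : Fin r → ℝ) : ℝ := hpoly r y / crconst r

/-- The dimension `a_r(k)` of the irreducible representation indexed by a positive
integer vector `k`. -/
noncomputable def adim (r : ℕ) (k : {k : Fin r → ℕ // ∀ i, 0 < k i}) : ℝ :=
  apoly r (fun i => (k.1 i : ℝ))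

/-!
Write `w i = a i * q ^ a i / (1 - q ^ a i)`. Each `w i` increases continuously from `0` to `∞` as
`q` runs through `(0, 1)`, hence so does the sum over `i`, and it takes every positive value exactly
once. At the point `q` where the sum equals `s`, weighted AM-GM shows that each single factor
`p ↦ p ^ w i * (1 - p ^ a i)` is maximal at `p = q`; multiplying these inequalities over all `i`
shows that `p ↦ p ^ s * ∏' i, (1 - p ^ a i)` is maximal at `q` as well.
-/

open Set

lemma hasProd_le_hasProd_of_nonneg {ι R : Type*} [CommMonoidWithZero R] [PartialOrder R]
    [ZeroLEOneClass R] [PosMulMono R] [TopologicalSpace R] [OrderClosedTopology R]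
    {f g : ι → R} {x y : R} (hf₀ : ∀ i, 0 ≤ f i) (hfg : ∀ i, f i ≤ g i)
    (hf : HasProd f x) (hg : HasProd g y) : x ≤ y :=
  le_of_tendsto_of_tendsto' hf hg fun _ => prod_le_prod (fun i _ => hf₀ i) fun i _ => hfg i

lemma hasProd_const_rpow {ι : Type*} {f : ι → ℝ} {q s : ℝ} (hq : 0 < q) (hf : HasSum f s) :
    HasProd (fun i => q ^ f i) (q ^ s) := by
  simpa only [Real.rpow_def_of_pos hq, Function.comp_def] using (hf.mul_left (Real.log q)).rexp

lemma summable_prod_fin {r : ℕ} {α : Fin r → Type*} {f : ∀ i, α i → ℝ} (hf₀ : ∀ i x, 0 ≤ f i x)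
    (hf : ∀ i, Summable (f i)) : Summable fun k : ∀ i, α i => ∏ i, f i (k i) := by
  induction r with
  | zero => exact .of_finite
  | succ r ih =>
    rw [← (Fin.consEquiv α).summable_iff]
    refine ((hf 0).mul_of_nonneg (ih (fun i => hf₀ i.succ) fun i => hf i.succ) (hf₀ 0)
      fun k => prod_nonneg fun i _ => hf₀ i.succ (k i)).congr fun k => ?_
    simp only [Function.comp_apply, Fin.consEquiv_apply, Fin.prod_univ_succ, Fin.cons_zero,
      Fin.cons_succ]

/-- The expected contribution `a q ^ a / (1 - q ^ a)` of an irreducible representation of dimension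
`a` to the dimension of a random representation under the Boltzmann measure `Q_q`: the multiplicity
of that irreducible is geometric with ratio `q ^ a`. -/
noncomputable def boltzmannMean (a q : ℝ) : ℝ := a * q ^ a / (1 - q ^ a)

section SingleTerm

variable {a p q : ℝ}

lemma rpow_mem_Ioo_zero_one (ha : 0 < a) (hq : q ∈ Ioo (0 : ℝ) 1) : q ^ a ∈ Ioo (0 : ℝ) 1 :=
  ⟨Real.rpow_pos_of_pos hq.1 a, Real.rpow_lt_one hq.1.le hq.2 ha⟩

lemma boltzmannMean_zero_right (ha : a ≠ 0) : boltzmannMean a 0 = 0 := by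
  simp [boltzmannMean, Real.zero_rpow ha]

lemma strictMonoOn_boltzmannMean (ha : 0 < a) : StrictMonoOn (boltzmannMean a) (Ico 0 1) := by
  intro p hp q hq hpq
  have hpow : p ^ a < q ^ a := Real.rpow_lt_rpow hp.1 hpq ha
  have hq1 : q ^ a < 1 := Real.rpow_lt_one hq.1 hq.2 ha
  exact div_lt_div₀ (mul_lt_mul_of_pos_left hpow ha) (by linarith)
    (mul_nonneg ha.le (Real.rpow_nonneg hq.1 a)) (by linarith)

lemma boltzmannMean_nonneg (ha : 0 < a) (hq : q ∈ Ico (0 : ℝ) 1) : 0 ≤ boltzmannMean a q :=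
  div_nonneg (mul_nonneg ha.le (Real.rpow_nonneg hq.1 a))
    (sub_nonneg.2 (Real.rpow_le_one hq.1 hq.2.le ha.le))

lemma continuousOn_boltzmannMean (ha : 0 < a) : ContinuousOn (boltzmannMean a) (Ico 0 1) := by
  have hpow : ContinuousOn (fun q : ℝ => q ^ a) (Ico 0 1) :=
    (Real.continuous_rpow_const ha.le).continuousOn
  refine (continuousOn_const.mul hpow).div (continuousOn_const.sub hpow) fun q hq => ?_
  exact (sub_pos.2 (Real.rpow_lt_one hq.1 hq.2 ha)).ne'

lemma exists_boltzmannMean_eq (ha : 0 < a) {s : ℝ} (hs : 0 < s) :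
    ∃ q ∈ Ioo (0 : ℝ) 1, boltzmannMean a q = s := by
  have hx : s / (s + a) ∈ Ioo (0 : ℝ) 1 :=
    ⟨by positivity, (div_lt_one (by positivity)).2 (by linarith)⟩
  refine ⟨(s / (s + a)) ^ a⁻¹, rpow_mem_Ioo_zero_one (inv_pos.2 ha) hx, ?_⟩
  rw [boltzmannMean, Real.rpow_inv_rpow hx.1.le ha.ne']
  have hsub : 1 - s / (s + a) = a / (s + a) := by field_simp; ring
  rw [hsub]
  field_simp

-- Trading `q ^ 2` for `q` absorbs the unbounded factor `a`, so the bound is summable over `a`.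
lemma boltzmannMean_sq_le (ha : 0 < a) (hq : q ∈ Ioo (0 : ℝ) 1) :
    boltzmannMean a (q ^ 2) ≤ q ^ a / -Real.log q := by
  have hx := rpow_mem_Ioo_zero_one ha hq
  have hlog : -(a * Real.log q) ≤ (q ^ a)⁻¹ - 1 := by
    have := Real.one_sub_inv_le_log_of_pos hx.1
    rw [Real.log_rpow hq.1] at this
    linarith
  have hsq : (q ^ 2) ^ a = (q ^ a) ^ 2 := (Real.rpow_pow_comm hq.1.le a 2).symm
  rw [boltzmannMean, hsq, div_le_div_iff₀ (by nlinarith [hx.1, hx.2])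
    (neg_pos.2 (Real.log_neg hq.1 hq.2))]
  calc a * (q ^ a) ^ 2 * -Real.log q = (q ^ a) ^ 2 * -(a * Real.log q) := by ring
    _ ≤ (q ^ a) ^ 2 * ((q ^ a)⁻¹ - 1) := mul_le_mul_of_nonneg_left hlog (sq_nonneg _)
    _ = q ^ a * (1 - q ^ a) := by field_simp [hx.1.ne']
    _ ≤ q ^ a * (1 - (q ^ a) ^ 2) := by
      refine mul_le_mul_of_nonneg_left ?_ hx.1.le
      nlinarith [hx.1, hx.2]

lemma rpow_mul_one_sub_rpow_one_sub_le {x y : ℝ} (hx : x ∈ Icc (0 : ℝ) 1) (hy : y ∈ Ioo (0 : ℝ) 1) :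
    x ^ y * (1 - x) ^ (1 - y) ≤ y ^ y * (1 - y) ^ (1 - y) := by
  have hx' : 0 ≤ 1 - x := sub_nonneg.2 hx.2
  have hy' : 0 < 1 - y := sub_pos.2 hy.2
  have amgm : (x / y) ^ y * ((1 - x) / (1 - y)) ^ (1 - y) ≤ 1 :=
    calc (x / y) ^ y * ((1 - x) / (1 - y)) ^ (1 - y)
        ≤ y * (x / y) + (1 - y) * ((1 - x) / (1 - y)) :=
          Real.geom_mean_le_arith_mean2_weighted hy.1.le hy'.le (div_nonneg hx.1 hy.1.le)
            (div_nonneg hx' hy'.le) (by ring)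
      _ = 1 := by rw [mul_div_cancel₀ _ hy.1.ne', mul_div_cancel₀ _ hy'.ne']; ring
  have hden : 0 < y ^ y * (1 - y) ^ (1 - y) :=
    mul_pos (Real.rpow_pos_of_pos hy.1 _) (Real.rpow_pos_of_pos hy' _)
  rwa [Real.div_rpow hx.1 hy.1.le, Real.div_rpow hx' hy'.le, div_mul_div_comm,
    div_le_one hden] at amgm

lemma rpow_boltzmannMean_mul_one_sub_rpow_le (ha : 0 < a) (hp : p ∈ Ioo (0 : ℝ) 1)
    (hq : q ∈ Ioo (0 : ℝ) 1) :
    p ^ boltzmannMean a q * (1 - p ^ a) ≤ q ^ boltzmannMean a q * (1 - q ^ a) := by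
  have hx := rpow_mem_Ioo_zero_one ha hp
  have hy := rpow_mem_Ioo_zero_one ha hq
  have hy' : 0 < 1 - q ^ a := sub_pos.2 hy.2
  have rpow_one_sub : ∀ {t : ℝ}, t ∈ Ioo (0 : ℝ) 1 →
      (t ^ boltzmannMean a q * (1 - t ^ a)) ^ (1 - q ^ a) =
        (t ^ a) ^ (q ^ a) * (1 - t ^ a) ^ (1 - q ^ a) := by
    intro t ht
    have h1 : 0 ≤ 1 - t ^ a := sub_nonneg.2 (rpow_mem_Ioo_zero_one ha ht).2.le
    rw [Real.mul_rpow (Real.rpow_nonneg ht.1.le _) h1, ← Real.rpow_mul ht.1.le,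
      ← Real.rpow_mul ht.1.le, boltzmannMean, div_mul_cancel₀ _ hy'.ne']
  refine (Real.rpow_le_rpow_iff ?_ ?_ hy').1 ?_
  · exact mul_nonneg (Real.rpow_nonneg hp.1.le _) (sub_nonneg.2 hx.2.le)
  · exact mul_nonneg (Real.rpow_nonneg hq.1.le _) hy'.le
  · rw [rpow_one_sub hp, rpow_one_sub hq]
    exact rpow_mul_one_sub_rpow_one_sub_le (Ioo_subset_Icc_self hx) hy

end SingleTerm

section Family

variable {ι : Type*} {a : ι → ℝ} {q s : ℝ}

lemma summable_boltzmannMean (ha : ∀ i, 0 < a i)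
    (hsum : ∀ q ∈ Ioo (0 : ℝ) 1, Summable fun i => q ^ a i) (hq : q ∈ Ioo (0 : ℝ) 1) :
    Summable fun i => boltzmannMean (a i) q := by
  have hsqrt : √q ∈ Ioo (0 : ℝ) 1 :=
    ⟨Real.sqrt_pos.2 hq.1, (Real.sqrt_lt' one_pos).2 (by simpa using hq.2)⟩
  refine .of_nonneg_of_le (fun i => boltzmannMean_nonneg (ha i) (Ioo_subset_Ico_self hq))
    (fun i => ?_) ((hsum (√q) hsqrt).div_const (-Real.log √q))
  simpa only [Real.sq_sqrt hq.1.le] using boltzmannMean_sq_le (ha i) hsqrt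

lemma strictMonoOn_tsum_boltzmannMean [Nonempty ι] (ha : ∀ i, 0 < a i)
    (hsum : ∀ q ∈ Ioo (0 : ℝ) 1, Summable fun i => q ^ a i) :
    StrictMonoOn (fun q => ∑' i, boltzmannMean (a i) q) (Ioo 0 1) := by
  intro p hp q hq hpq
  have hlt : ∀ i, boltzmannMean (a i) p < boltzmannMean (a i) q := fun i =>
    strictMonoOn_boltzmannMean (ha i) (Ioo_subset_Ico_self hp) (Ioo_subset_Ico_self hq) hpq
  exact Summable.tsum_lt_tsum (fun i => (hlt i).le) (hlt (Classical.arbitrary ι))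
    (summable_boltzmannMean ha hsum hp) (summable_boltzmannMean ha hsum hq)

lemma continuousOn_tsum_boltzmannMean (ha : ∀ i, 0 < a i)
    (hsum : Summable fun i => boltzmannMean (a i) q) (hq : q < 1) :
    ContinuousOn (fun p => ∑' i, boltzmannMean (a i) p) (Icc 0 q) := by
  have hsub : Icc 0 q ⊆ Ico 0 1 := Icc_subset_Ico_right hq
  refine continuousOn_tsum (fun i => (continuousOn_boltzmannMean (ha i)).mono hsub) hsum
    fun i p hp => ?_
  rw [Real.norm_of_nonneg (boltzmannMean_nonneg (ha i) (hsub hp))]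
  exact (strictMonoOn_boltzmannMean (ha i)).monotoneOn (hsub hp)
    (hsub (right_mem_Icc.2 (hp.1.trans hp.2))) hp.2

lemma exists_tsum_boltzmannMean_eq [Nonempty ι] (ha : ∀ i, 0 < a i)
    (hsum : ∀ q ∈ Ioo (0 : ℝ) 1, Summable fun i => q ^ a i) (hs : 0 < s) :
    ∃ q ∈ Ioo (0 : ℝ) 1, ∑' i, boltzmannMean (a i) q = s := by
  let i₀ : ι := Classical.arbitrary ι
  obtain ⟨b, hb, hbs⟩ := exists_boltzmannMean_eq (ha i₀) hs
  have hb_sum := summable_boltzmannMean ha hsum hb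
  have at_zero : ∑' i, boltzmannMean (a i) 0 = 0 := by
    simp only [boltzmannMean_zero_right (ha _).ne', tsum_zero]
  have le_at_b : s ≤ ∑' i, boltzmannMean (a i) b :=
    hbs.symm.trans_le <| hb_sum.le_tsum i₀ fun i _ =>
      boltzmannMean_nonneg (ha i) (Ioo_subset_Ico_self hb)
  obtain ⟨q, hq, hqs⟩ := intermediate_value_Icc hb.1.le
    (continuousOn_tsum_boltzmannMean ha hb_sum hb.2) ⟨at_zero.trans_le hs.le, le_at_b⟩
  have hq0 : q ≠ 0 := by
    rintro rfl
    exact hs.ne (at_zero.symm.trans hqs)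
  exact ⟨q, ⟨hq.1.lt_of_ne' hq0, hq.2.trans_lt hb.2⟩, hqs⟩

lemma isMaxOn_rpow_mul_tprod_one_sub_rpow (ha : ∀ i, 0 < a i)
    (hsum : ∀ q ∈ Ioo (0 : ℝ) 1, Summable fun i => q ^ a i) (hq : q ∈ Ioo (0 : ℝ) 1)
    (hqs : HasSum (fun i => boltzmannMean (a i) q) s) :
    IsMaxOn (fun p : ℝ => p ^ s * ∏' i, (1 - p ^ a i)) (Ioo 0 1) q := by
  have hasProd : ∀ p ∈ Ioo (0 : ℝ) 1,
      HasProd (fun i => p ^ boltzmannMean (a i) q * (1 - p ^ a i))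
        (p ^ s * ∏' i, (1 - p ^ a i)) := by
    intro p hp
    have hmul : Multipliable fun i => 1 - p ^ a i := by
      simpa only [sub_eq_add_neg] using Real.multipliable_one_add_of_summable (hsum p hp).neg
    exact (hasProd_const_rpow hp.1 hqs).mul hmul.hasProd
  intro p hp
  refine hasProd_le_hasProd_of_nonneg (fun i => ?_)
    (fun i => rpow_boltzmannMean_mul_one_sub_rpow_le (ha i) hp hq) (hasProd p hp) (hasProd q hq)
  exact mul_nonneg (Real.rpow_nonneg hp.1.le _)
    (sub_nonneg.2 (rpow_mem_Ioo_zero_one (ha i) hp).2.le)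

theorem stmt17_general [Nonempty ι] (ha : ∀ i, 0 < a i)
    (hsum : ∀ q ∈ Ioo (0 : ℝ) 1, Summable fun i => q ^ a i) (hs : 0 < s) :
    (∃! q : ℝ, q ∈ Ioo (0 : ℝ) 1 ∧ ∑' i, boltzmannMean (a i) q = s) ∧
    ∀ q : ℝ, q ∈ Ioo (0 : ℝ) 1 → ∑' i, boltzmannMean (a i) q = s →
      IsMaxOn (fun p : ℝ => p ^ s * ∏' i, (1 - p ^ a i)) (Ioo 0 1) q := by
  refine ⟨?_, fun q hq hqs => ?_⟩
  · obtain ⟨q, hq, hqs⟩ := exists_tsum_boltzmannMean_eq ha hsum hs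
    exact ⟨q, ⟨hq, hqs⟩, fun p ⟨hp, hps⟩ =>
      (strictMonoOn_tsum_boltzmannMean ha hsum).injOn hp hq (hps.trans hqs.symm)⟩
  · exact isMaxOn_rpow_mul_tprod_one_sub_rpow ha hsum hq
      (hqs ▸ (summable_boltzmannMean ha hsum hq).hasSum)

end Family

section WeylDimension

variable {r : ℕ}

lemma crconst_pos (r : ℕ) : 0 < crconst r :=
  prod_pos fun _ _ => Nat.factorial_pos _

lemma hpoly_pos {y : Fin r → ℝ} (hy : ∀ i, 0 < y i) : 0 < hpoly r y :=
  prod_pos fun _ hp => sum_pos (fun i _ => hy i) (nonempty_Icc.2 (mem_filter.1 hp).2)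

-- The sum of all coordinates is the factor `(ℓ, j) = (1, r)` of `h_r`; the other factors are `≥ 1`.
lemma sum_le_hpoly {y : Fin r → ℝ} (hy : ∀ i, 1 ≤ y i) : ∑ i, y i ≤ hpoly r y := by
  have hy₀ : ∀ i, 0 ≤ y i := fun i => zero_le_one.trans (hy i)
  have one_le_factor : ∀ p ∈ univ.filter (fun p : Fin r × Fin r => p.1 ≤ p.2),
      1 ≤ ∑ i ∈ Finset.Icc p.1 p.2, y i := fun p hp =>
    (hy p.1).trans <| single_le_sum (fun i _ => hy₀ i)
      (Finset.left_mem_Icc.2 (mem_filter.1 hp).2)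
  cases r with
  | zero => simp [hpoly]
  | succ m =>
    have hsub : {(0, Fin.last m)} ⊆ univ.filter (fun p : Fin (m + 1) × Fin (m + 1) => p.1 ≤ p.2) :=
      singleton_subset_iff.2 (mem_filter.2 ⟨mem_univ _, Fin.zero_le _⟩)
    calc ∑ i, y i
        = ∏ p ∈ {((0 : Fin (m + 1)), Fin.last m)}, ∑ i ∈ Finset.Icc p.1 p.2, y i := by
          rw [Finset.prod_singleton, ← bot_eq_zero, ← Fin.top_eq_last, Finset.Icc_bot_top]
      _ ≤ hpoly (m + 1) y :=
          prod_le_prod_of_subset_of_one_le hsub (fun p _ => sum_nonneg fun i _ => hy₀ i)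
            fun p hp _ => one_le_factor p hp

lemma adim_pos (k : {k : Fin r → ℕ // ∀ i, 0 < k i}) : 0 < adim r k :=
  div_pos (hpoly_pos fun i => Nat.cast_pos.2 (k.2 i)) (Nat.cast_pos.2 (crconst_pos r))

lemma sum_div_crconst_le_adim (k : {k : Fin r → ℕ // ∀ i, 0 < k i}) :
    (∑ i, (k.1 i : ℝ)) / crconst r ≤ adim r k :=
  div_le_div_of_nonneg_right (sum_le_hpoly fun i => Nat.one_le_cast.2 (k.2 i)) (Nat.cast_nonneg _)

lemma summable_rpow_adim {q : ℝ} (hq : q ∈ Ioo (0 : ℝ) 1) :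
    Summable fun k : {k : Fin r → ℕ // ∀ i, 0 < k i} => q ^ adim r k := by
  set x : ℝ := q ^ (crconst r : ℝ)⁻¹
  have hx : x ∈ Ioo (0 : ℝ) 1 :=
    rpow_mem_Ioo_zero_one (inv_pos.2 (Nat.cast_pos.2 (crconst_pos r))) hq
  have hgeom : Summable fun k : Fin r → ℕ => ∏ i, x ^ k i :=
    summable_prod_fin (fun _ n => pow_nonneg hx.1.le n)
      fun _ => summable_geometric_of_lt_one hx.1.le hx.2
  refine .of_nonneg_of_le (fun k => Real.rpow_nonneg hq.1.le _) (fun k => ?_)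
    (hgeom.subtype {k | ∀ i, 0 < k i})
  calc q ^ adim r k ≤ q ^ ((∑ i, (k.1 i : ℝ)) / crconst r) :=
        Real.rpow_le_rpow_of_exponent_ge hq.1 hq.2.le (sum_div_crconst_le_adim k)
    _ = ∏ i, x ^ k.1 i := by
        rw [div_eq_inv_mul, Real.rpow_mul hq.1.le, prod_pow_eq_pow_sum, ← Real.rpow_natCast,
          Nat.cast_sum]

end WeylDimension

/-- Proposition 4.2: there is a unique `q_n ∈ (0,1)` with
`∑_k a_r(k) q^{a_r(k)}/(1-q^{a_r(k)}) = n`, and it maximizes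
`q ↦ q^n ∏_k (1 - q^{a_r(k)})` over `(0,1)`. -/
theorem stmt17 (r : ℕ) (hr : 1 ≤ r) (n : ℕ) (hn : 1 ≤ n) :
    (∃! q : ℝ, q ∈ Set.Ioo (0 : ℝ) 1 ∧
      (∑' k : {k : Fin r → ℕ // ∀ i, 0 < k i},
        adim r k * q ^ adim r k / (1 - q ^ adim r k)) = n) ∧
    ∀ q : ℝ, q ∈ Set.Ioo (0 : ℝ) 1 →
      (∑' k : {k : Fin r → ℕ // ∀ i, 0 < k i},
        adim r k * q ^ adim r k / (1 - q ^ adim r k)) = n →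
      IsMaxOn (fun p : ℝ =>
        p ^ n * ∏' k : {k : Fin r → ℕ // ∀ i, 0 < k i}, (1 - p ^ adim r k))
        (Set.Ioo (0 : ℝ) 1) q := by
  have : Nonempty {k : Fin r → ℕ // ∀ i, 0 < k i} := ⟨⟨1, fun _ => one_pos⟩⟩
  simpa only [boltzmannMean, Real.rpow_natCast] using
    stmt17_general adim_pos (fun _ hq => summable_rpow_adim hq) (Nat.cast_pos.2 hn)
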